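/- Let λ be a σ-finite measure and q₁,…,qₙ ∈ L²(λ), and fix an embedding dimension d_e ≥ 1. Define q̄ = (1/n) Σᵢ qᵢ and the centered covariance operator K g = Σᵢ ⟨qᵢ − q̄, g⟩ (qᵢ − q̄); a PCA embedding of q₁,…,qₙ is any family p₁,…,pₙ ∈ ℝ^{d_e} of the form pᵢ = (⟨qᵢ − q̄, φ₁⟩,…,⟨qᵢ − q̄, φ_{d_e}⟩) for a choice of orthonormal eigenfunctions φ₁,…,φ_{d_e} of K associated with its top d_e eigenvalues (counted with multiplicity, in decreasing order). Then there exists a constant C > 0, depending only on q₁,…,qₙ and d_e, such that for every q̂₁,…,q̂ₙ ∈ L²(λ) and every PCA embedding (p̂ᵢ) of q̂₁,…,q̂ₙ, there exists a PCA embedding (p̃ᵢ) of q₁,…,qₙ with Σᵢ ‖p̃ᵢ − p̂ᵢ‖² ≤ C · n · (Σᵢ ‖qᵢ − q̂ᵢ‖²) · (1 + Σᵢ ‖qᵢ − q̂ᵢ‖²). -/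

import Mathlib

open MeasureTheory Filter
open scoped ENNReal RealInnerProductSpace BigOperators

noncomputable section

namespace Stmt1

variable {α : Type*} [MeasurableSpace α]

/-- The mean of the functions `q i`. -/
def qbar {μ : Measure α} {n : ℕ} (q : Fin n → Lp ℝ 2 μ) : Lp ℝ 2 μ :=
  (n : ℝ)⁻¹ • ∑ i, q i

/-- The centered covariance operator `K g = Σᵢ ⟨qᵢ − q̄, g⟩ (qᵢ − q̄)`. -/
def covOp {μ : Measure α} {n : ℕ} (q : Fin n → Lp ℝ 2 μ) (g : Lp ℝ 2 μ) : Lp ℝ 2 μ :=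
  ∑ i, ⟪q i - qbar q, g⟫ • (q i - qbar q)

/-- `p` is a PCA embedding of `q₁, …, qₙ` in dimension `de`: there is an orthonormal family
`ψ₁, …, ψ_{de}` of eigenfunctions of the centered covariance operator, with eigenvalues
`lam₁ ≥ ⋯ ≥ lam_{de}` which are the top `de` eigenvalues (any eigenvalue of the operator on
the orthogonal complement of the `ψ`'s is no larger), such that
`pᵢ = (⟨qᵢ − q̄, ψ₁⟩, …, ⟨qᵢ − q̄, ψ_{de}⟩)`. -/
def IsPCAEmbedding {μ : Measure α} {n : ℕ} (de : ℕ) (q : Fin n → Lp ℝ 2 μ)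
    (p : Fin n → EuclideanSpace ℝ (Fin de)) : Prop :=
  ∃ (lam : Fin de → ℝ) (ψ : Fin de → Lp ℝ 2 μ),
    Orthonormal ℝ ψ ∧ Antitone lam ∧
    (∀ k, covOp q (ψ k) = lam k • ψ k) ∧
    (∀ (c : ℝ) (v : Lp ℝ 2 μ), ‖v‖ = 1 → covOp q v = c • v →
      (∀ k, ⟪ψ k, v⟫ = 0) → ∀ k, c ≤ lam k) ∧
    ∀ i k, p i k = ⟪q i - qbar q, ψ k⟫

section Abstract

variable {H : Type*} [NormedAddCommGroup H] [InnerProductSpace ℝ H] {n : ℕ}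

/-- Analysis map `x ↦ (⟪a i, x⟫)ᵢ`. -/
def adj (a : Fin n → H) : H →ₗ[ℝ] EuclideanSpace ℝ (Fin n) where
  toFun x := WithLp.toLp 2 (fun i => ⟪a i, x⟫)
  map_add' x y := by ext i; simp [inner_add_right]
  map_smul' c x := by ext i; simp [inner_smul_right]

/-- Covariance operator as a linear map. -/
def cov (a : Fin n → H) : H →ₗ[ℝ] H where
  toFun x := ∑ i, ⟪a i, x⟫ • a i
  map_add' x y := by simp [inner_add_right, add_smul, Finset.sum_add_distrib]
  map_smul' c x := by simp [inner_smul_right, mul_smul, Finset.smul_sum]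

/-- Hilbert-Schmidt norm. -/
def hs (a : Fin n → H) : ℝ := √(∑ i, ‖a i‖ ^ 2)

lemma hs_nonneg (a : Fin n → H) : 0 ≤ hs a := Real.sqrt_nonneg _

lemma hs_sq (a : Fin n → H) : hs a ^ 2 = ∑ i, ‖a i‖ ^ 2 :=
  Real.sq_sqrt (Finset.sum_nonneg fun _ _ => sq_nonneg _)

lemma adj_apply (a : Fin n → H) (x : H) (i : Fin n) : adj a x i = ⟪a i, x⟫ := rfl

lemma cov_apply (a : Fin n → H) (x : H) : cov a x = ∑ i, ⟪a i, x⟫ • a i := rfl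

lemma adj_norm_sq (a : Fin n → H) (x : H) : ‖adj a x‖ ^ 2 = ∑ i, ⟪a i, x⟫ ^ 2 := by
  rw [EuclideanSpace.norm_sq_eq]; simp [adj_apply]

lemma cov_inner (a : Fin n → H) (x y : H) : ⟪cov a x, y⟫ = ⟪adj a x, adj a y⟫ := by
  simp [cov_apply, sum_inner, inner_smul_left, PiLp.inner_apply, adj_apply, mul_comm]

lemma cov_symm (a : Fin n → H) : (cov a).IsSymmetric := by
  intro x y
  rw [cov_inner, real_inner_comm, ← cov_inner, real_inner_comm]

lemma cov_inner_self (a : Fin n → H) (x : H) : ⟪cov a x, x⟫ = ‖adj a x‖ ^ 2 := by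
  rw [cov_inner, real_inner_self_eq_norm_sq]

lemma adj_le (a : Fin n → H) (x : H) : ‖adj a x‖ ≤ hs a * ‖x‖ := by
  refine (sq_le_sq₀ (norm_nonneg _) (by have := hs_nonneg a; positivity)).1 ?_
  rw [adj_norm_sq, mul_pow, hs_sq, Finset.sum_mul]
  refine Finset.sum_le_sum fun i _ => ?_
  rw [← mul_pow]
  exact sq_le_sq.2 (by rw [abs_of_nonneg (by positivity : 0 ≤ ‖a i‖ * ‖x‖)]; exact abs_real_inner_le_norm _ _)

lemma syn_le (a : Fin n → H) (c : EuclideanSpace ℝ (Fin n)) : ‖∑ i, c i • a i‖ ≤ ‖c‖ * hs a := by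
  calc ‖∑ i, c i • a i‖ ≤ ∑ i, ‖c i • a i‖ := norm_sum_le _ _
    _ = ∑ i, ‖c i‖ * ‖a i‖ := by simp [norm_smul]
    _ ≤ √(∑ i, ‖c i‖ ^ 2) * √(∑ i, ‖a i‖ ^ 2) := Real.sum_mul_le_sqrt_mul_sqrt _ _ _
    _ = _ := by rw [EuclideanSpace.norm_eq]; rfl

lemma cov_le (a : Fin n → H) (x : H) : ‖cov a x‖ ≤ hs a * hs a * ‖x‖ := by
  have h1 := syn_le a (adj a x)
  have h2 := adj_le a x
  have h3 := hs_nonneg a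
  calc ‖cov a x‖ ≤ ‖adj a x‖ * hs a := h1
    _ ≤ (hs a * ‖x‖) * hs a := by gcongr
    _ = _ := by ring

lemma adj_sub (a b : Fin n → H) (x : H) : adj a x - adj b x = adj (a - b) x := by
  ext i; simp [adj_apply, inner_sub_left]

lemma hs_sub_comm (a b : Fin n → H) : hs (a - b) = hs (b - a) := by
  unfold hs; simp [norm_sub_rev]

lemma adj_tri (a b : Fin n → H) (x : H) : ‖adj b x‖ ≤ ‖adj a x‖ + hs (a - b) * ‖x‖ := by
  have h := adj_le (a - b) x
  rw [← adj_sub] at h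
  have := norm_sub_norm_le (adj b x) (adj a x)
  rw [norm_sub_rev] at this
  linarith

lemma cov_sub_le (a b : Fin n → H) (x : H) (hx : ‖x‖ = 1) :
    ‖cov a x - cov b x‖ ≤ hs (a - b) * (2 * hs a + hs (a - b)) := by
  have e : cov a x - cov b x
      = (∑ i, (adj (a - b) x) i • a i) + ∑ i, (adj b x) i • (a - b) i := by
    simp only [cov_apply, ← adj_sub, ← Finset.sum_add_distrib, ← Finset.sum_sub_distrib]
    refine Finset.sum_congr rfl fun i _ => ?_
    simp only [PiLp.sub_apply, adj_apply, Pi.sub_apply, sub_smul, smul_sub]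
    abel
  rw [e]
  have h1 := syn_le a (adj (a - b) x)
  have h2 := syn_le (a - b) (adj b x)
  have h3 := adj_le (a - b) x
  have h4 := adj_tri a b x
  have h5 := adj_le a x
  rw [hx] at h3 h4 h5
  have := hs_nonneg a
  have := hs_nonneg (a - b)
  have h6 : ‖adj (a - b) x‖ * hs a ≤ (hs (a - b)) * hs a := by gcongr; linarith
  have h7 : ‖adj b x‖ * hs (a - b) ≤ (hs a + hs (a - b)) * hs (a - b) := by gcongr; linarith
  have := norm_add_le (∑ i, (adj (a - b) x) i • a i) (∑ i, (adj b x) i • (a - b) i)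
  nlinarith

lemma cov_mem (a : Fin n → H) (x : H) : cov a x ∈ Submodule.span ℝ (Set.range a) := by
  rw [cov_apply]
  exact Submodule.sum_mem _ fun i _ => Submodule.smul_mem _ _ (Submodule.subset_span ⟨i, rfl⟩)

lemma eig_orth (a : Fin n → H) {x y : H} {s t : ℝ} (hx : cov a x = s • x) (hy : cov a y = t • y)
    (h : s ≠ t) : ⟪x, y⟫ = 0 := by
  have := cov_symm a x y
  rw [hx, hy, inner_smul_left, inner_smul_right] at this
  simp at this
  rcases this with hst | hxy
  · exact absurd hst h
  · exact hxy

/-- Orthonormal system of top eigenvectors. -/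
structure Top (m : ℕ) (a : Fin n → H) (lam : Fin m → ℝ) (ψ : Fin m → H) : Prop where
  orth : Orthonormal ℝ ψ
  anti : Antitone lam
  eig : ∀ k, cov a (ψ k) = lam k • ψ k
  top : ∀ (c : ℝ) (v : H), ‖v‖ = 1 → cov a v = c • v → (∀ k, ⟪ψ k, v⟫ = 0) → ∀ k, c ≤ lam k

lemma eig_norm_sq (a : Fin n → H) {x : H} {s : ℝ} (hx : cov a x = s • x) (h1 : ‖x‖ = 1) :
    ‖adj a x‖ ^ 2 = s := by
  rw [← cov_inner_self, hx, inner_smul_left, real_inner_self_eq_norm_sq, h1]; simp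

lemma eig_nonneg (a : Fin n → H) {x : H} {s : ℝ} (hx : cov a x = s • x) (h1 : ‖x‖ = 1) :
    0 ≤ s := by
  rw [← eig_norm_sq a hx h1]; positivity

/-- Rayleigh bound. -/
lemma rayleigh (a : Fin n → H) {κ : Type*} [Finite κ] (ψ : κ → H) (lam : κ → ℝ)
    (eig : ∀ k, cov a (ψ k) = lam k • ψ k) (c : ℝ)
    (top : ∀ (c' : ℝ) (v : H), ‖v‖ = 1 → cov a v = c' • v → (∀ k, ⟪ψ k, v⟫ = 0) → c' ≤ c)
    (x : H) (hx : ∀ k, ⟪ψ k, x⟫ = 0) : ‖adj a x‖ ^ 2 ≤ c * ‖x‖ ^ 2 := by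
  classical
  let V : Submodule ℝ H := Submodule.span ℝ (Set.range a ∪ {x})
  have : FiniteDimensional ℝ V :=
    FiniteDimensional.span_of_finite ℝ ((Set.finite_range a).union (Set.finite_singleton x))
  let P : Submodule ℝ H := (Submodule.span ℝ (Set.range ψ))ᗮ
  have memP : ∀ v, v ∈ P ↔ ∀ k, ⟪ψ k, v⟫ = 0 := by
    intro v
    constructor
    · intro h k
      exact (Submodule.mem_orthogonal _ _).1 h _ (Submodule.subset_span ⟨k, rfl⟩)
    · intro h
      rw [Submodule.mem_orthogonal]
      intro u hu
      induction hu using Submodule.span_induction with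
      | mem u hu => obtain ⟨k, rfl⟩ := hu; exact h k
      | zero => simp
      | add u w _ _ h1 h2 => rw [inner_add_left, h1, h2, add_zero]
      | smul r u _ h1 => rw [inner_smul_left, h1, mul_zero]
  let U : Submodule ℝ H := V ⊓ P
  have : FiniteDimensional ℝ U := Submodule.finiteDimensional_of_le (inf_le_left : U ≤ V)
  have inv : ∀ v ∈ U, cov a v ∈ U := by
    intro v hv
    refine ⟨Submodule.span_mono Set.subset_union_left (cov_mem a v), (memP _).2 fun k => ?_⟩
    rw [← cov_symm a, eig, inner_smul_left, (memP v).1 hv.2 k, mul_zero]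
  have hT := (cov_symm a).restrict_invariant inv
  have hxU : x ∈ U := ⟨Submodule.subset_span (Set.mem_union_right _ rfl), (memP x).2 hx⟩
  let b := hT.eigenvectorBasis rfl
  have hb : ∀ j, hT.eigenvalues rfl j ≤ c := by
    intro j
    refine top _ (b j : H) (b.orthonormal.1 j) ?_ ((memP _).1 (b j).2.2)
    have := hT.apply_eigenvectorBasis rfl j
    exact congrArg Subtype.val this
  have key : ‖adj a x‖ ^ 2 = ∑ j, hT.eigenvalues rfl j * ⟪b j, (⟨x, hxU⟩ : U)⟫ ^ 2 := by
    rw [← cov_inner_self]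
    have : ⟪cov a x, x⟫ = ⟪((cov a).restrict inv) ⟨x, hxU⟩, (⟨x, hxU⟩ : U)⟫ := rfl
    rw [this, ← b.sum_inner_mul_inner]
    refine Finset.sum_congr rfl fun j _ => ?_
    rw [hT, hT.apply_eigenvectorBasis rfl j, inner_smul_right, real_inner_comm]
    simp only [RCLike.ofReal_real_eq_id, id]
    change _ * ⟪b j, _⟫ * _ = _
    ring
  have hn : ‖x‖ ^ 2 = ∑ j, ⟪b j, (⟨x, hxU⟩ : U)⟫ ^ 2 := by
    have := b.sum_sq_norm_inner_right (⟨x, hxU⟩ : U)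
    simp only [Real.norm_eq_abs, sq_abs] at this
    rw [this]; rfl
  rw [key, hn, Finset.mul_sum]
  exact Finset.sum_le_sum fun j _ => mul_le_mul_of_nonneg_right (hb j) (sq_nonneg _)

lemma Top.rayleigh {m : ℕ} {a : Fin n → H} {lam : Fin m → ℝ} {ψ : Fin m → H}
    (h : Top m a lam ψ) (k : Fin m) (x : H) (hx : ∀ j, j < k → ⟪ψ j, x⟫ = 0) :
    ‖adj a x‖ ^ 2 ≤ lam k * ‖x‖ ^ 2 := by
  refine Stmt1.rayleigh a (fun j : {j // j < k} => ψ j) (fun j => lam j) (fun j => h.eig j) _ ?_ x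
    (fun j => hx j j.2)
  intro c v hv hcv hvo
  by_contra! hc
  refine absurd (h.top c v hv hcv (fun j => ?_) k) (not_le.2 hc)
  by_cases hj : j < k
  · exact hvo ⟨j, hj⟩
  · refine eig_orth a (h.eig j) hcv (ne_of_lt ?_)
    exact lt_of_le_of_lt (h.anti (not_lt.1 hj)) hc

/-- Courant-Fischer comparison. -/
lemma courant (a b : Fin n → H) {ι κ : Type*} [Fintype ι] [Fintype κ]
    (hcard : Fintype.card κ < Fintype.card ι) (f : ι → H) (e : κ → H) (lam : ι → ℝ) (s t : ℝ)
    (hf : Orthonormal ℝ f) (heig : ∀ i, cov b (f i) = lam i • f i) (hs' : ∀ i, s ≤ lam i)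
    (ht : ∀ x, (∀ k, ⟪e k, x⟫ = 0) → ‖adj a x‖ ^ 2 ≤ t * ‖x‖ ^ 2) :
    √s ≤ √t + hs (a - b) := by
  classical
  let L : (ι → ℝ) →ₗ[ℝ] (κ → ℝ) :=
    { toFun := fun c k => ⟪e k, ∑ i, c i • f i⟫
      map_add' := by
        intro c d; ext k; simp [add_smul, Finset.sum_add_distrib, inner_add_right]
      map_smul' := by
        intro r d; ext k; simp [mul_smul, ← Finset.smul_sum, inner_smul_right] }
  have hk : LinearMap.ker L ≠ ⊥ := LinearMap.ker_ne_bot_of_finrank_lt (by simpa using hcard)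
  obtain ⟨c, hc, hc0⟩ := (Submodule.ne_bot_iff _).1 hk
  set x := ∑ i, c i • f i with hx
  have hxe : ∀ k, ⟪e k, x⟫ = 0 := fun k => congrFun hc k
  have hnx : ‖x‖ ^ 2 = ∑ i, c i ^ 2 := by
    rw [← real_inner_self_eq_norm_sq, hx, hf.inner_sum]
    simp [sq]
  have hbx : ‖adj b x‖ ^ 2 = ∑ i, lam i * c i ^ 2 := by
    rw [← cov_inner_self]
    have : cov b x = ∑ i, (c i * lam i) • f i := by
      rw [hx, map_sum]; simp [heig, mul_smul]
    rw [this, hx, hf.inner_sum]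
    refine Finset.sum_congr rfl fun i _ => ?_
    simp; ring
  have hpos : 0 < ‖x‖ := by
    refine lt_of_pow_lt_pow_left₀ 2 (norm_nonneg _) ?_
    rw [hnx, zero_pow two_ne_zero]
    obtain ⟨i, hi⟩ := Function.ne_iff.1 hc0
    exact lt_of_lt_of_le (by have : c i ≠ 0 := hi; positivity)
      (Finset.single_le_sum (f := fun i => c i ^ 2) (fun i _ => sq_nonneg _) (Finset.mem_univ i))
  have h1 : s * ‖x‖ ^ 2 ≤ ‖adj b x‖ ^ 2 := by
    rw [hnx, hbx, Finset.mul_sum]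
    exact Finset.sum_le_sum fun i _ => mul_le_mul_of_nonneg_right (hs' i) (sq_nonneg _)
  have h2 : √s * ‖x‖ ≤ ‖adj b x‖ := by
    have := Real.sqrt_le_sqrt h1
    rwa [Real.sqrt_mul' _ (sq_nonneg _), Real.sqrt_sq hpos.le, Real.sqrt_sq (norm_nonneg _)] at this
  have h3 : ‖adj a x‖ ≤ √t * ‖x‖ := by
    have := Real.sqrt_le_sqrt (ht x hxe)
    rwa [Real.sqrt_mul' _ (sq_nonneg _), Real.sqrt_sq hpos.le, Real.sqrt_sq (norm_nonneg _)] at this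
  have h4 := adj_tri a b x
  refine le_of_mul_le_mul_right ?_ hpos
  linarith

lemma weyl {m : ℕ} {a b : Fin n → H} {lam mu : Fin m → ℝ} {ψ e : Fin m → H}
    (h : Top m b lam ψ) (h' : Top m a mu e) (k : Fin m) :
    √(lam k) ≤ √(mu k) + hs (a - b) := by
  refine courant a b (ι := {j // j ≤ k}) (κ := {j // j < k}) ?_ (fun j => ψ j) (fun j => e j)
    (fun j => lam j) _ _ (h.orth.comp _ Subtype.val_injective) (fun j => h.eig j)
    (fun j => h.anti j.2) (fun x hx => h'.rayleigh k x fun j hj => hx ⟨j, hj⟩)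
  refine Fintype.card_lt_of_injective_of_notMem
    (fun j : {j // j < k} => (⟨j, j.2.le⟩ : {j // j ≤ k})) ?_ (b := ⟨k, le_rfl⟩) ?_
  · intro i j hij
    exact Subtype.ext (congrArg (fun z : {j // j ≤ k} => z.1) hij)
  · rintro ⟨j, hj⟩
    exact absurd (congrArg (fun z : {j // j ≤ k} => z.1) hj) (ne_of_lt j.2)

/-- Any orthonormal choice of eigenvectors for the same eigenvalues is again top. -/
lemma Top.change {m : ℕ} {a : Fin n → H} {mu : Fin m → ℝ} {e φ : Fin m → H}
    (h : Top m a mu e) (hφ : Orthonormal ℝ φ) (heig : ∀ k, cov a (φ k) = mu k • φ k) :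
    Top m a mu φ := by
  refine ⟨hφ, h.anti, heig, ?_⟩
  intro c v hv hcv hvo k
  by_contra! hk
  have hex : ∃ k, mu k < c := ⟨k, hk⟩
  obtain ⟨k', hk', hmin⟩ : ∃ k', mu k' < c ∧ ∀ j, j < k' → c ≤ mu j := by
    have hne : ({k | mu k < c} : Set (Fin m)).Nonempty := hex
    refine ⟨WellFounded.min wellFounded_lt _ hne, WellFounded.min_mem wellFounded_lt _ hne, ?_⟩
    intro j hj
    by_contra! hcj
    exact WellFounded.not_lt_min wellFounded_lt {k | mu k < c} hcj hj
  have horth : Orthonormal ℝ (fun o : Option {j // j < k'} => o.elim v (fun j => φ j)) := by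
    constructor
    · rintro (_ | j)
      · exact hv
      · exact hφ.1 _
    · rintro (_ | i) (_ | j) hij
      · exact absurd rfl hij
      · change ⟪v, φ j⟫ = 0
        rw [real_inner_comm]; exact hvo _
      · exact hvo _
      · exact hφ.2 (fun h => hij (by rw [Subtype.ext h]))
  have := courant a a (ι := Option {j // j < k'}) (κ := {j // j < k'}) (by simp)
    _ (fun j => e j) (fun o => o.elim c (fun j => mu j)) c (mu k') horth
    (by rintro (_ | j)
        · exact hcv
        · exact heig _)
    (by rintro (_ | j)
        · exact le_rfl
        · exact hmin _ j.2)
    (fun x hx => h.rayleigh k' x fun j hj => hx ⟨j, hj⟩)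
  have h0 : hs (a - a) = 0 := by simp [hs]
  rw [h0, add_zero] at this
  have h1 : 0 ≤ mu k' := eig_nonneg a (heig k') (hφ.1 k')
  have := (Real.sqrt_le_sqrt_iff h1).1 this
  linarith

/-- Existence. -/
lemma exists_top {m : ℕ} (a : Fin n → H) (ψ : Fin m → H) (hψ : Orthonormal ℝ ψ) :
    ∃ mu e, Top m a mu e := by
  classical
  let V : Submodule ℝ H := Submodule.span ℝ (Set.range a ∪ Set.range ψ)
  have : FiniteDimensional ℝ V :=
    FiniteDimensional.span_of_finite ℝ ((Set.finite_range a).union (Set.finite_range ψ))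
  have hψV : ∀ k, ψ k ∈ V := fun k => Submodule.subset_span (Set.mem_union_right _ ⟨k, rfl⟩)
  have hcV : ∀ x, cov a x ∈ V := fun x => Submodule.span_mono Set.subset_union_left (cov_mem a x)
  have hm : m ≤ Module.finrank ℝ V := by
    have hl : LinearIndependent ℝ (fun k => (⟨ψ k, hψV k⟩ : V)) := by
      apply LinearIndependent.of_comp V.subtype
      exact hψ.linearIndependent
    simpa using hl.fintype_card_le_finrank
  have inv : ∀ v ∈ V, cov a v ∈ V := fun v _ => hcV v
  have hT := (cov_symm a).restrict_invariant inv
  let b := hT.eigenvectorBasis rfl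
  let ev := hT.eigenvalues rfl
  have hb : ∀ j, cov a (b j : H) = ev j • (b j : H) := by
    intro j
    exact congrArg Subtype.val (hT.apply_eigenvectorBasis rfl j)
  have hbn : ∀ j, ‖(b j : H)‖ = 1 := fun j => b.orthonormal.1 j
  refine ⟨fun k => ev (Fin.castLE hm k), fun k => (b (Fin.castLE hm k) : H), ?_, ?_, ?_, ?_⟩
  · exact ⟨fun k => hbn _, fun i j hij => b.orthonormal.2
      (fun h => hij (Fin.castLE_injective hm h))⟩
  · intro i j hij
    exact hT.eigenvalues_antitone rfl (by simpa using hij)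
  · intro k; exact hb _
  · intro c v hv hcv hvo k
    by_cases hc : c ≤ 0
    · exact hc.trans (eig_nonneg a (hb _) (hbn _))
    push Not at hc
    have hvV : v ∈ V := by
      have : v = c⁻¹ • cov a v := by rw [hcv, smul_smul, inv_mul_cancel₀ hc.ne', one_smul]
      rw [this]; exact V.smul_mem _ (hcV v)
    have : ∃ j, ⟪(b j : H), v⟫ ≠ 0 := by
      by_contra! hall
      have := b.sum_sq_norm_inner_right (⟨v, hvV⟩ : V)
      have h0 : ∀ j, ⟪b j, (⟨v, hvV⟩ : V)⟫ = 0 := fun j => hall j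
      have h1 : ‖(⟨v, hvV⟩ : V)‖ = 1 := hv
      rw [h1] at this
      simp [h0] at this
    obtain ⟨j, hj⟩ := this
    have hcj : c = ev j := by
      by_contra hne
      exact hj (eig_orth a (hb j) hcv (Ne.symm hne))
    rw [hcj]
    apply hT.eigenvalues_antitone rfl
    by_contra! hlt
    have hjm : (j : ℕ) < m := lt_trans hlt k.2
    exact hj (hvo ⟨j, hjm⟩)

/-- Approximate eigenvectors for a nonzero value are near true eigenvectors. -/
lemma near_eig (a : Fin n → H) (t : ℝ) (ht : 0 < t) :
    ∃ D : ℝ, 0 ≤ D ∧ ∀ x, ∃ x', cov a x' = t • x' ∧ ‖x' - x‖ ≤ D * ‖cov a x - t • x‖ := by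
  let F : Submodule ℝ H := Submodule.span ℝ (Set.range a)
  have : FiniteDimensional ℝ F := FiniteDimensional.span_of_finite ℝ (Set.finite_range a)
  let T : F →ₗ[ℝ] H := (cov a - t • LinearMap.id) ∘ₗ F.subtype
  have hTa : ∀ y : F, T y = cov a y - t • (y : H) := fun y => rfl
  obtain ⟨S, hS⟩ := T.rangeRestrict.exists_rightInverse_of_surjective (LinearMap.range_rangeRestrict T)
  let S' := LinearMap.toContinuousLinearMap S
  refine ⟨t⁻¹ * (‖S'‖ * (hs a * hs a) + 1), by have := hs_nonneg a; positivity, fun x => ?_⟩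
  let y : F := ⟨cov a x, cov_mem a x⟩
  let z := T.rangeRestrict y
  have hz : (z : H) = cov a (cov a x - t • x) := by
    change cov a (cov a x) - t • cov a x = _
    rw [map_sub, map_smul]
  have hzn : ‖z‖ ≤ hs a * hs a * ‖cov a x - t • x‖ := by
    have := cov_le a (cov a x - t • x)
    rw [← hz] at this; exact this
  have hSz : T (S z) = (z : H) := by
    have := LinearMap.congr_fun hS z
    exact congrArg Subtype.val this
  have hSn : ‖(S z : H)‖ ≤ ‖S'‖ * (hs a * hs a * ‖cov a x - t • x‖) :=
    (S'.le_opNorm z).trans (by gcongr)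
  refine ⟨t⁻¹ • ((y : H) - (S z : H)), ?_, ?_⟩
  · have h1 : T (y - S z) = 0 := by
      rw [map_sub, hSz]; exact sub_self _
    rw [hTa, sub_eq_zero] at h1
    have h2 : ((y - S z : F) : H) = (y : H) - (S z : H) := rfl
    rw [h2] at h1
    rw [map_smul, h1, smul_comm]
  · have : t⁻¹ • ((y : H) - (S z : H)) - x = t⁻¹ • ((cov a x - t • x) - (S z : H)) := by
      change t⁻¹ • (cov a x - (S z : H)) - x = _
      simp only [smul_sub, smul_smul, inv_mul_cancel₀ ht.ne', one_smul]
      abel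
    rw [this, norm_smul, Real.norm_of_nonneg (inv_nonneg.2 ht.le), mul_assoc]
    gcongr
    have := norm_sub_le (cov a x - t • x) (S z : H)
    linarith

/-- Gram-Schmidt stability within eigenspaces. -/
lemma gs_stab (a : Fin n → H) {ι : Type*} [DecidableEq ι] (mu : ι → ℝ) (s : Finset ι) :
    ∃ C : ℝ, 1 ≤ C ∧ ∀ (ψ x : ι → H) (δ : ℝ), 0 ≤ δ → C * δ ≤ 1 → Orthonormal ℝ ψ →
      (∀ i, cov a (x i) = mu i • x i) → (∀ i, ‖x i - ψ i‖ ≤ δ) →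
      ∃ φ : ι → H, (∀ i ∈ s, cov a (φ i) = mu i • φ i ∧ ‖φ i‖ = 1 ∧ ‖φ i - ψ i‖ ≤ C * δ) ∧
        ∀ i ∈ s, ∀ j ∈ s, i ≠ j → ⟪φ i, φ j⟫ = 0 := by
  induction s using Finset.induction_on with
  | empty => exact ⟨1, le_rfl, fun ψ x δ _ _ _ _ _ => ⟨ψ, by simp, by simp⟩⟩
  | insert k s hk ih =>
    obtain ⟨C, hC, ih⟩ := ih
    have hcard : (0 : ℝ) ≤ (s.card : ℝ) := Nat.cast_nonneg _
    refine ⟨C + 2 * (1 + s.card * (2 * C + 1)), by nlinarith, ?_⟩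
    intro ψ x δ hδ hCδ hψ hx hxψ
    have hp : 0 ≤ s.card * (2 * C + 1) * δ := by positivity
    have hCδ0 : C * δ ≤ 1 := by nlinarith
    have hCδn : 0 ≤ C * δ := by positivity
    have hδ1 : δ ≤ 1 := by nlinarith
    obtain ⟨φ, hφ, hφo⟩ := ih ψ x δ hδ hCδ0 hψ hx hxψ
    have hxk : ‖x k‖ ≤ 2 := by
      have := norm_sub_norm_le (x k) (ψ k)
      rw [hψ.1 k] at this
      linarith [hxψ k]
    have hc : ∀ j ∈ s, |⟪φ j, x k⟫| ≤ (2 * C + 1) * δ := by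
      intro j hj
      have hjk : j ≠ k := fun h => hk (h ▸ hj)
      have e : ⟪φ j, x k⟫ = ⟪φ j - ψ j, x k⟫ + ⟪ψ j, x k - ψ k⟫ := by
        rw [inner_sub_left, inner_sub_right, hψ.2 hjk]; ring
      rw [e]
      have h1 := abs_real_inner_le_norm (φ j - ψ j) (x k)
      have h2 := abs_real_inner_le_norm (ψ j) (x k - ψ k)
      rw [hψ.1 j, one_mul] at h2
      have h3 : ‖φ j - ψ j‖ * ‖x k‖ ≤ (C * δ) * 2 :=
        mul_le_mul (hφ j hj).2.2 hxk (norm_nonneg _) hCδn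
      have := abs_add_le ⟪φ j - ψ j, x k⟫ ⟪ψ j, x k - ψ k⟫
      linarith [hxψ k]
    set w := ∑ j ∈ s, ⟪φ j, x k⟫ • φ j with hw
    have hwn : ‖w‖ ≤ s.card * ((2 * C + 1) * δ) := by
      rw [← nsmul_eq_mul]
      refine (norm_sum_le _ _).trans (Finset.sum_le_card_nsmul _ _ _ fun j hj => ?_)
      rw [norm_smul, (hφ j hj).2.1, mul_one]
      exact hc j hj
    set y := x k - w with hy
    set η := δ + s.card * ((2 * C + 1) * δ) with hη
    have hyψ : ‖y - ψ k‖ ≤ η := by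
      have : y - ψ k = (x k - ψ k) - w := by rw [hy]; abel
      rw [this]
      exact (norm_sub_le _ _).trans (add_le_add (hxψ k) hwn)
    have h2η : C * δ + 2 * η = (C + 2 * (1 + s.card * (2 * C + 1))) * δ := by rw [hη]; ring
    have hη1 : 2 * η ≤ 1 := by linarith
    have habs : |‖y‖ - 1| ≤ η := by
      have := abs_norm_sub_norm_le y (ψ k)
      rw [hψ.1 k] at this; linarith
    have hypos : 0 < ‖y‖ := by
      have := (abs_le.1 habs).1; linarith
    set u := ‖y‖⁻¹ • y with hu
    have hun : ‖u‖ = 1 := by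
      rw [hu, norm_smul, norm_inv, norm_norm, inv_mul_cancel₀ hypos.ne']
    have huy : ‖u - y‖ = |‖y‖ - 1| := by
      have : u - y = (‖y‖⁻¹ - 1) • y := by rw [hu, sub_smul, one_smul]
      rw [this, norm_smul, Real.norm_eq_abs, ← abs_of_pos hypos, ← abs_mul, abs_of_pos hypos,
        sub_mul, inv_mul_cancel₀ hypos.ne', one_mul, abs_sub_comm]
    have huψ : ‖u - ψ k‖ ≤ 2 * η := by
      have := norm_sub_le_norm_sub_add_norm_sub u y (ψ k)
      linarith
    have hcy : cov a y = mu k • y := by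
      rw [hy, map_sub, smul_sub, hx, hw, map_sum, Finset.smul_sum]
      congr 1
      refine Finset.sum_congr rfl fun j hj => ?_
      rw [map_smul, (hφ j hj).1, smul_smul, smul_smul]
      congr 1
      have := cov_symm a (φ j) (x k)
      rw [(hφ j hj).1, hx, inner_smul_left, inner_smul_right] at this
      simp only [conj_trivial] at this
      linarith
    have hcu : cov a u = mu k • u := by rw [hu, map_smul, hcy, smul_comm]
    have hou : ∀ i ∈ s, ⟪φ i, u⟫ = 0 := by
      intro i hi
      have : ⟪φ i, w⟫ = ⟪φ i, x k⟫ := by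
        rw [hw, inner_sum, Finset.sum_eq_single_of_mem i hi]
        · rw [inner_smul_right, real_inner_self_eq_norm_sq, (hφ i hi).2.1]; simp
        · intro j hj hji
          rw [inner_smul_right, hφo i hi j hj (Ne.symm hji), mul_zero]
      rw [hu, inner_smul_right, hy, inner_sub_right, this, sub_self, mul_zero]
    have hne : ∀ i ∈ s, i ≠ k := fun i hi h => hk (h ▸ hi)
    refine ⟨Function.update φ k u, ?_, ?_⟩
    · intro i hi
      rcases Finset.mem_insert.1 hi with rfl | hi
      · simp only [Function.update_self]
        exact ⟨hcu, hun, by linarith⟩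
      · rw [Function.update_of_ne (hne i hi)]
        refine ⟨(hφ i hi).1, (hφ i hi).2.1, (hφ i hi).2.2.trans ?_⟩
        have : 0 ≤ η := by rw [hη]; nlinarith
        linarith
    · intro i hi j hj hij
      rcases Finset.mem_insert.1 hi with h1 | h1 <;> rcases Finset.mem_insert.1 hj with h2 | h2
      · exact absurd (h1.trans h2.symm) hij
      · rw [h1, Function.update_self, Function.update_of_ne (hne j h2), real_inner_comm]
        exact hou j h2
      · rw [h2, Function.update_self, Function.update_of_ne (hne i h1)]
        exact hou i h1
      · rw [Function.update_of_ne (hne i h1), Function.update_of_ne (hne j h2)]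
        exact hφo i h1 j h2 hij

/-- Main perturbation bound. -/
lemma perturb {m : ℕ} (a : Fin n → H) (mu : Fin m → ℝ) (e : Fin m → H) (he : Top m a mu e) :
    ∃ C : ℝ, 0 ≤ C ∧ ∀ (b : Fin n → H) (lam : Fin m → ℝ) (ψ : Fin m → H), Top m b lam ψ →
      ∃ φ, Top m a mu φ ∧ ∀ k, ‖adj a (φ k) - adj b (ψ k)‖ ≤ C * hs (a - b) := by
  classical
  let κ := {k : Fin m // 0 < mu k}
  have hD := fun k : κ => near_eig a (mu k) k.2
  choose D hD0 hD using hD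
  obtain ⟨C, hC, hgs⟩ := gs_stab a (fun k : κ => mu k) Finset.univ
  set D' := ∑ k, D k with hD'
  have hDD : ∀ k, D k ≤ D' := fun k =>
    Finset.single_le_sum (f := D) (fun k _ => hD0 k) (Finset.mem_univ k)
  have hD'0 : 0 ≤ D' := Finset.sum_nonneg fun k _ => hD0 k
  have hM := hs_nonneg a
  set M := hs a with hMdef
  set L := 4 * M + 2 with hL
  set R := 1 + C * (D' * L) with hR
  have hDL : 0 ≤ D' * L := by positivity
  have hCDL : 0 ≤ C * (D' * L) := by positivity
  have hmu : ∀ k, √(mu k) ≤ M := by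
    intro k
    rw [← eig_norm_sq a (he.eig k) (he.orth.1 k), Real.sqrt_sq (norm_nonneg _)]
    have := adj_le a (e k)
    rwa [he.orth.1, mul_one] at this
  have hmu0 : ∀ k, 0 ≤ mu k := fun k => eig_nonneg a (he.eig k) (he.orth.1 k)
  refine ⟨M * (C * (D' * L)) + 2 * M * R + 1, by positivity, ?_⟩
  intro b lam ψ hψ
  have hε := hs_nonneg (a - b)
  set ε := hs (a - b) with hεdef
  have hlam0 : ∀ k, 0 ≤ lam k := fun k => eig_nonneg b (hψ.eig k) (hψ.orth.1 k)
  have hsl : ∀ k, ‖adj b (ψ k)‖ = √(lam k) := fun k => by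
    rw [← eig_norm_sq b (hψ.eig k) (hψ.orth.1 k), Real.sqrt_sq (norm_nonneg _)]
  have hw1 : ∀ k, √(lam k) ≤ √(mu k) + ε := weyl hψ he
  have hw2 : ∀ k, √(mu k) ≤ √(lam k) + ε := fun k => by
    have := weyl he hψ k
    rwa [hs_sub_comm] at this
  have hX1 : 0 ≤ M * (C * (D' * L)) * ε := by positivity
  have hX2 : 0 ≤ 2 * M * R * ε := by positivity
  by_cases hsmall : R * ε ≤ 1
  · have hε1 : ε ≤ 1 := by nlinarith
    have hCδ : C * (D' * L * ε) ≤ 1 := by nlinarith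
    have hres : ∀ k, ‖cov a (ψ k) - mu k • ψ k‖ ≤ L * ε := by
      intro k
      have h1 := cov_sub_le a b (ψ k) (hψ.orth.1 k)
      rw [hψ.eig k] at h1
      have h2 : ‖lam k • ψ k - mu k • ψ k‖ = |lam k - mu k| := by
        rw [← sub_smul, norm_smul, hψ.orth.1, mul_one, Real.norm_eq_abs]
      have h3 : |lam k - mu k| ≤ ε * (2 * M + ε) := by
        have e1 : lam k - mu k = (√(lam k) - √(mu k)) * (√(lam k) + √(mu k)) := by
          have := Real.sq_sqrt (hlam0 k)
          have := Real.sq_sqrt (hmu0 k)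
          nlinarith
        have p1 := Real.sqrt_nonneg (lam k)
        have p2 := Real.sqrt_nonneg (mu k)
        rw [e1, abs_mul, abs_of_nonneg (add_nonneg p1 p2)]
        refine mul_le_mul ?_ ?_ (by positivity) hε
        · rw [abs_le]; constructor <;> linarith [hw1 k, hw2 k]
        · linarith [hw1 k, hmu k]
      have h4 := norm_sub_le_norm_sub_add_norm_sub (cov a (ψ k)) (lam k • ψ k) (mu k • ψ k)
      rw [h2] at h4
      nlinarith
    have hxex : ∀ k : κ, ∃ x', cov a x' = mu k • x' ∧ ‖x' - ψ k‖ ≤ D' * L * ε := by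
      intro k
      obtain ⟨x', h1, h2⟩ := hD k (ψ k)
      refine ⟨x', h1, h2.trans ?_⟩
      rw [mul_assoc]
      exact mul_le_mul (hDD k) (hres k) (norm_nonneg _) hD'0
    choose x hx1 hx2 using hxex
    obtain ⟨φ, hφ, hφo⟩ := hgs (fun k => ψ k) x (D' * L * ε) (by positivity) hCδ
      (hψ.orth.comp _ Subtype.val_injective) hx1 hx2
    let Φ : Fin m → H := fun k => if h : 0 < mu k then φ ⟨k, h⟩ else e k
    have hΦp : ∀ k (h : 0 < mu k), Φ k = φ ⟨k, h⟩ := fun k h => dif_pos h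
    have hΦn : ∀ k (h : ¬ 0 < mu k), Φ k = e k := fun k h => dif_neg h
    have hΦe : ∀ k, cov a (Φ k) = mu k • Φ k := by
      intro k
      by_cases h : 0 < mu k
      · rw [hΦp k h]; exact (hφ _ (Finset.mem_univ _)).1
      · rw [hΦn k h]; exact he.eig k
    have hΦo : Orthonormal ℝ Φ := by
      constructor
      · intro k
        by_cases h : 0 < mu k
        · rw [hΦp k h]; exact (hφ _ (Finset.mem_univ _)).2.1
        · rw [hΦn k h]; exact he.orth.1 k
      · intro i j hij
        by_cases hne : mu i = mu j
        · by_cases h : 0 < mu i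
          · have h' : 0 < mu j := hne ▸ h
            rw [hΦp i h, hΦp j h']
            exact hφo _ (Finset.mem_univ _) _ (Finset.mem_univ _)
              (fun hh => hij (congrArg Subtype.val hh))
          · have h' : ¬ 0 < mu j := hne ▸ h
            rw [hΦn i h, hΦn j h']
            exact he.orth.2 hij
        · exact eig_orth a (hΦe i) (hΦe j) hne
    refine ⟨Φ, he.change hΦo hΦe, fun k => ?_⟩
    by_cases h : 0 < mu k
    · have e1 : adj a (Φ k) - adj b (ψ k) = adj a (Φ k - ψ k) + adj (a - b) (ψ k) := by
        rw [← adj_sub, map_sub]; abel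
      rw [e1]
      have h1 := adj_le a (Φ k - ψ k)
      have h2 := adj_le (a - b) (ψ k)
      rw [hψ.orth.1, mul_one] at h2
      have h3 : ‖Φ k - ψ k‖ ≤ C * (D' * L * ε) := by
        rw [hΦp k h]; exact (hφ _ (Finset.mem_univ _)).2.2
      have h4 : M * ‖Φ k - ψ k‖ ≤ M * (C * (D' * L * ε)) := by gcongr
      have := norm_add_le (adj a (Φ k - ψ k)) (adj (a - b) (ψ k))
      nlinarith
    · have hz : mu k = 0 := le_antisymm (not_lt.1 h) (hmu0 k)
      have h0 : adj a (Φ k) = 0 := by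
        have := eig_norm_sq a (hΦe k) (hΦo.1 k)
        rw [hz] at this
        exact norm_eq_zero.1 (by simpa using this)
      rw [h0, zero_sub, norm_neg, hsl]
      have := hw1 k
      rw [hz, Real.sqrt_zero] at this
      nlinarith
  · push Not at hsmall
    refine ⟨e, he, fun k => ?_⟩
    have h1 := adj_le a (e k)
    rw [he.orth.1, mul_one] at h1
    have h2 := hsl k
    have h3 := hw1 k
    have h4 := hmu k
    have h5 := norm_sub_le (adj a (e k)) (adj b (ψ k))
    have h6 : 2 * M * 1 ≤ 2 * M * (R * ε) := by gcongr
    nlinarith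

lemma hs_center (d : Fin n → H) :
    ∑ i, ‖d i - (n : ℝ)⁻¹ • ∑ j, d j‖ ^ 2 ≤ ∑ i, ‖d i‖ ^ 2 := by
  rcases Nat.eq_zero_or_pos n with rfl | hn
  · simp
  have hn' : (0 : ℝ) < n := by exact_mod_cast hn
  set S := ∑ j, d j with hS
  have : ∑ i, ‖d i - (n : ℝ)⁻¹ • S‖ ^ 2 = ∑ i, ‖d i‖ ^ 2 - (n : ℝ)⁻¹ * ‖S‖ ^ 2 := by
    simp only [norm_sub_sq_real, Finset.sum_add_distrib, Finset.sum_sub_distrib,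
      ← Finset.mul_sum, ← sum_inner, ← hS]
    simp [inner_smul_right, norm_smul, mul_pow]
    field_simp
    ring
  rw [this]
  have : 0 ≤ (n : ℝ)⁻¹ * ‖S‖ ^ 2 := by positivity
  linarith

end Abstract

theorem stmt1 (μ : Measure α) [SigmaFinite μ] (n : ℕ) (q : Fin n → Lp ℝ 2 μ)
    (de : ℕ) (hde : 1 ≤ de) :
    ∃ C > (0 : ℝ), ∀ (qh : Fin n → Lp ℝ 2 μ) (ph : Fin n → EuclideanSpace ℝ (Fin de)),
      IsPCAEmbedding de qh ph →
      ∃ pt : Fin n → EuclideanSpace ℝ (Fin de), IsPCAEmbedding de q pt ∧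
        ∑ i, ‖pt i - ph i‖ ^ 2 ≤
          C * n * (∑ i, ‖q i - qh i‖ ^ 2) * (1 + ∑ i, ‖q i - qh i‖ ^ 2) := by
  classical
  let cen : (Fin n → Lp ℝ 2 μ) → Fin n → Lp ℝ 2 μ := fun q i => q i - qbar q
  have hcov : ∀ q g, covOp q g = cov (cen q) g := fun _ _ => rfl
  by_cases hex : ∃ mu e, Top de (cen q) mu e
  · obtain ⟨mu, e, he⟩ := hex
    obtain ⟨C, hC, hp⟩ := perturb (cen q) mu e he
    refine ⟨de * C ^ 2 + 1, by positivity, ?_⟩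
    rintro qh ph ⟨lam, ψ, h1, h2, h3, h4, h5⟩
    obtain ⟨φ, hφ, hb⟩ := hp (cen qh) lam ψ ⟨h1, h2, h3, h4⟩
    refine ⟨fun i => WithLp.toLp 2 (fun k => ⟪q i - qbar q, φ k⟫),
      ⟨mu, φ, hφ.orth, hφ.anti, hφ.eig, hφ.top, fun i k => rfl⟩, ?_⟩
    rcases Nat.eq_zero_or_pos n with rfl | hn
    · simp
    have hn' : (1 : ℝ) ≤ n := by exact_mod_cast hn
    have hE : hs (cen q - cen qh) ^ 2 ≤ ∑ i, ‖q i - qh i‖ ^ 2 := by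
      rw [hs_sq]
      refine le_trans (le_of_eq ?_) (hs_center (fun i => q i - qh i))
      refine Finset.sum_congr rfl fun i _ => ?_
      congr 2
      simp only [cen, qbar, Pi.sub_apply, Finset.sum_sub_distrib, smul_sub]
      abel
    set E := ∑ i, ‖q i - qh i‖ ^ 2 with hEdef
    have hE0 : 0 ≤ E := Finset.sum_nonneg fun _ _ => sq_nonneg _
    have hsum : ∑ i, ‖(WithLp.toLp 2 (fun k => ⟪q i - qbar q, φ k⟫) : EuclideanSpace ℝ (Fin de))
        - ph i‖ ^ 2 = ∑ k, ‖adj (cen q) (φ k) - adj (cen qh) (ψ k)‖ ^ 2 := by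
      simp only [EuclideanSpace.norm_sq_eq]
      rw [Finset.sum_comm]
      refine Finset.sum_congr rfl fun k _ => Finset.sum_congr rfl fun i _ => ?_
      simp only [PiLp.sub_apply, h5, adj_apply, cen]
    have hfin : ∑ k, ‖adj (cen q) (φ k) - adj (cen qh) (ψ k)‖ ^ 2 ≤ de * C ^ 2 * E := by
      calc _ ≤ ∑ _k : Fin de, C ^ 2 * E := by
            refine Finset.sum_le_sum fun k _ => ?_
            calc _ ≤ (C * hs (cen q - cen qh)) ^ 2 := by gcongr; exact hb k
              _ = C ^ 2 * hs (cen q - cen qh) ^ 2 := by ring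
              _ ≤ _ := by gcongr
        _ = _ := by simp; ring
    calc _ = _ := hsum
      _ ≤ de * C ^ 2 * E := hfin
      _ ≤ (de * C ^ 2 + 1) * E := by gcongr; linarith
      _ = (de * C ^ 2 + 1) * 1 * E * 1 := by ring
      _ ≤ _ := by gcongr; linarith
  · refine ⟨1, one_pos, ?_⟩
    rintro qh ph ⟨lam, ψ, h1, -⟩
    exact absurd (exists_top (cen q) ψ h1) hex

end Stmt1
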